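/- arXiv:2002.12452 — 3 statements merged into one kernel-verified Lean document; each statement's English description precedes it below -/
import Mathlib

section
/- An infinite modular ortholattice of finite dimension does not admit a finite universal test set. -/
/-- An ortholattice: a bounded lattice with an order-reversing involution `x ↦ x′`
satisfying `x ⊓ x′ = ⊥` and `x ⊔ x′ = ⊤`. -/
class Ortholattice (α : Type*) extends Lattice α, BoundedOrder α where
  compl : α → α
  compl_antitone : ∀ x y : α, x ≤ y → compl y ≤ compl x
  compl_compl : ∀ x : α, compl (compl x) = x
  inf_compl : ∀ x : α, x ⊓ compl x = ⊥
  sup_compl : ∀ x : α, x ⊔ compl x = ⊤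

postfix:max "′" => Ortholattice.compl

/-- Ortholattice terms in the operations ∧, ∨, ', 0, 1 with variables indexed by ℕ. -/
inductive OLTerm : Type
  | var : ℕ → OLTerm
  | zero : OLTerm
  | one : OLTerm
  | inf : OLTerm → OLTerm → OLTerm
  | sup : OLTerm → OLTerm → OLTerm
  | compl : OLTerm → OLTerm

/-- Evaluation of an ortholattice term under a substitution `v`. -/
def OLTerm.eval {α : Type*} [Ortholattice α] (v : ℕ → α) : OLTerm → α
  | var i => v i
  | zero => ⊥
  | one => ⊤
  | inf t s => t.eval v ⊓ s.eval v
  | sup t s => t.eval v ⊔ s.eval v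
  | compl t => (t.eval v)′

/-- A term is a tautology of an ortholattice if it evaluates to ⊤ under every substitution. -/
def IsTautology (α : Type*) [Ortholattice α] (t : OLTerm) : Prop :=
  ∀ v : ℕ → α, t.eval v = ⊤

/-- A universal test set: every term evaluating to ⊤ under all substitutions from `T`
is a tautology. -/
def IsUniversalTestSet (α : Type*) [Ortholattice α] (T : Set α) : Prop :=
  ∀ t : OLTerm, (∀ v : ℕ → α, (∀ i, v i ∈ T) → t.eval v = ⊤) → IsTautology α t

/-- A lattice has finite dimension `d` if some maximal chain has exactly `d + 1` elements. -/
def HasDim (α : Type*) [Lattice α] (d : ℕ) : Prop :=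
  ∃ s : Set α, IsMaxChain (· ≤ ·) s ∧ s.ncard = d + 1

/-!
A line of a modular ortholattice carrying infinitely many atoms contains infinitely many pairwise
non-orthogonal ones, since each atom of the line is orthogonal to at most one other. The commutator
of two distinct non-orthogonal atoms of a line `u` is `u` itself, whereas the commutator of equal
elements is `⊥`. By the pigeonhole principle the meet of all commutators `comm xᵢ xⱼ`, `i ≠ j ≤ n`,
vanishes under every substitution from a set of `n` elements, but it is at least `u` on the atoms
just found.

Such a line exists in every infinite modular ortholattice of finite dimension: take `u` minimal with
infinitely many atoms below it, an atom `a ≤ u` and a complement `c` of `a` in `u`. By minimality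
there are only finitely many atoms `q ≤ c`. Projecting along `a` sends each atom `b ≠ a` below `u`
to such a `q` with `b ≤ a ⊔ q`, so one of the lines `a ⊔ q` has infinitely many atoms.
-/

open Set

section FiniteDimension

variable {α : Type*} [Lattice α] [IsModularLattice α]

lemma wellFoundedLT_Iic_of_covBy {a b : α} (hab : a ⋖ b) [WellFoundedLT (Iic a)] :
    WellFoundedLT (Iic b) := by
  have : Finite (Icc a b) := by
    rw [hab.Icc_eq]
    infer_instance
  let f : Iic b → Iic a × Icc a b := fun x ↦
    (⟨x ⊓ a, inf_le_right⟩, ⟨x ⊔ a, le_sup_right, sup_le x.2 hab.le⟩)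
  have hf : StrictMono f := fun x y hxy ↦ strictMono_inf_prod_sup (z := a) (show x.1 < y.1 from hxy)
  exact hf.wellFoundedLT

lemma wellFoundedLT_of_finite_flag [BoundedOrder α] (s : Flag α) [Finite s] : WellFoundedLT α := by
  have wf_Iic (x : s) : WellFoundedLT (Iic (x : α)) := by
    induction x using WellFoundedLT.induction with
    | ind x ih =>
      obtain rfl | hx := eq_bot_or_bot_lt x
      · have : Finite (Iic (⊥ : α)) := by
          rw [Iic_bot]
          infer_instance
        exact inferInstanceAs (WellFoundedLT (Iic (⊥ : α)))
      · obtain ⟨y, -, hyx⟩ := exists_le_covBy_of_lt hx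
        have := ih y hyx.lt
        exact wellFoundedLT_Iic_of_covBy (Flag.coe_covBy_coe.2 hyx)
  have : WellFoundedLT (Iic (⊤ : α)) := wf_Iic ⊤
  exact OrderIso.IicTop.symm.strictMono.wellFoundedLT

lemma HasDim.wellFoundedLT [BoundedOrder α] {d : ℕ} (h : HasDim α d) : WellFoundedLT α := by
  obtain ⟨s, hs, hcard⟩ := h
  have : Finite (Flag.ofIsMaxChain s hs) := Set.finite_of_ncard_ne_zero (s := s) (by lia)
  exact wellFoundedLT_of_finite_flag (Flag.ofIsMaxChain s hs)

end FiniteDimension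

/-- The set of atoms below `u`: the points lying on the subspace `u`, in the language of projective
geometry. -/
def atomsBelow {α : Type*} [PartialOrder α] [OrderBot α] (u : α) : Set α :=
  {b | IsAtom b ∧ b ≤ u}

/-- A line of projective geometry: the join of two distinct atoms. Infinite families of pairwise
non-orthogonal atoms are found on lines. -/
def IsLine {α : Type*} [SemilatticeSup α] [OrderBot α] (u : α) : Prop :=
  ∃ p q : α, IsAtom p ∧ IsAtom q ∧ p ≠ q ∧ p ⊔ q = u

lemma IsLine.ne_bot {α : Type*} [SemilatticeSup α] [OrderBot α] {u : α} (hu : IsLine u) :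
    u ≠ ⊥ := by
  obtain ⟨p, q, hp, -, -, rfl⟩ := hu
  exact fun h ↦ hp.ne_bot (sup_eq_bot_iff.1 h).1

lemma infinite_setOf_isAtom {α : Type*} [PartialOrder α] [OrderBot α] [IsAtomistic α]
    [Infinite α] : {a : α | IsAtom a}.Infinite := by
  intro hfin
  have : Finite {a : α | IsAtom a} := hfin
  have hinj : Function.Injective fun x : α ↦ {a : {a : α | IsAtom a} | a.1 ≤ x} :=
    fun x y hxy ↦ eq_iff_atom_le_iff.2 fun a ha ↦ Set.ext_iff.1 hxy ⟨a, ha⟩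
  exact (Finite.of_injective _ hinj).false

section Modular

variable {α : Type*} [Lattice α]

section UpperModular

variable [OrderBot α] [IsUpperModularLattice α]

lemma covBy_sup_of_isAtom {a b : α} (hb : IsAtom b) (hba : ¬b ≤ a) : a ⋖ a ⊔ b := by
  apply covBy_sup_of_inf_covBy_right
  rw [inf_comm, (hb.not_le_iff_disjoint.1 hba).eq_bot]
  exact hb.bot_covBy

lemma covBy_sup_of_isAtom_of_ne {a b : α} (ha : IsAtom a) (hb : IsAtom b) (hab : a ≠ b) :
    a ⋖ a ⊔ b :=
  covBy_sup_of_isAtom hb fun h ↦ hab ((ha.le_iff_eq hb.ne_bot).1 h).symm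

lemma sup_eq_of_isAtom_of_covBy {a b u : α} (ha : IsAtom a) (hb : IsAtom b) (hab : a ≠ b)
    (hau : a ⋖ u) (hbu : b ≤ u) : a ⊔ b = u :=
  (hau.eq_or_eq le_sup_left (sup_le hau.le hbu)).resolve_left
    (covBy_sup_of_isAtom_of_ne ha hb hab).ne'

namespace IsLine

variable {u x y : α}

lemma covBy (hu : IsLine u) (hx : x ∈ atomsBelow u) : x ⋖ u := by
  obtain ⟨p, q, hp, hq, hpq, rfl⟩ := hu
  have hpu : p ⋖ p ⊔ q := covBy_sup_of_isAtom_of_ne hp hq hpq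
  obtain rfl | hpx := eq_or_ne p x
  · exact hpu
  · rw [← sup_eq_of_isAtom_of_covBy hp hx.1 hpx hpu hx.2, sup_comm]
    exact covBy_sup_of_isAtom_of_ne hx.1 hp hpx.symm

lemma sup_eq (hu : IsLine u) (hx : x ∈ atomsBelow u) (hy : y ∈ atomsBelow u) (hxy : x ≠ y) :
    x ⊔ y = u :=
  sup_eq_of_isAtom_of_covBy hx.1 hy.1 hxy (hu.covBy hx) hy.2

end IsLine

end UpperModular

variable [IsModularLattice α]

lemma isAtomistic_of_complementedLattice_of_isAtomic [BoundedOrder α] [ComplementedLattice α]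
    [IsAtomic α] : IsAtomistic α := by
  refine ⟨fun b ↦ ⟨atomsBelow b, ⟨fun a ha ↦ ha.2, fun c hc ↦ ?_⟩, fun a ha ↦ ha.1⟩⟩
  obtain ⟨d, hdisj, hsup⟩ :=
    IsModularLattice.exists_disjoint_and_sup_eq (inf_le_left : b ⊓ c ≤ b)
  have hd : d = ⊥ := by
    refine (eq_bot_or_exists_atom_le d).resolve_right ?_
    rintro ⟨a, ha, had⟩
    have hab : a ≤ b := had.trans (hsup ▸ le_sup_right)
    exact ha.ne_bot (le_bot_iff.1 (hdisj (le_inf hab (hc ⟨ha, hab⟩)) had))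
  rw [hd, sup_bot_eq] at hsup
  exact inf_eq_left.1 hsup

lemma exists_isAtom_le_and_sup_eq [OrderBot α] {a b c : α} (hac : Disjoint a c) (hb : IsAtom b)
    (hba : ¬b ≤ a) (hbac : b ≤ a ⊔ c) : ∃ q ∈ atomsBelow c, a ⊔ q = a ⊔ b := by
  have hsup : a ⊔ c ⊓ (a ⊔ b) = a ⊔ b := by
    rw [← sup_inf_assoc_of_le c (le_sup_left : a ≤ a ⊔ b), inf_eq_right]
    exact sup_le le_sup_left hbac
  have hinf : a ⊓ (c ⊓ (a ⊔ b)) = ⊥ := (hac.mono_right inf_le_left).eq_bot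
  have hatom : IsAtom (c ⊓ (a ⊔ b)) := by
    rw [← bot_covBy_iff, ← hinf]
    apply inf_covBy_of_covBy_sup_left
    rw [hsup]
    exact covBy_sup_of_isAtom hb hba
  exact ⟨c ⊓ (a ⊔ b), ⟨hatom, inf_le_left⟩, hsup⟩

lemma exists_infinite_atomsBelow_sup [OrderBot α] {a c : α} (ha : IsAtom a) (hac : Disjoint a c)
    (hinf : (atomsBelow (a ⊔ c)).Infinite) (hfin : (atomsBelow c).Finite) :
    ∃ q ∈ atomsBelow c, (atomsBelow (a ⊔ q)).Infinite := by
  by_contra! hcon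
  refine hinf.sdiff (finite_singleton a) ((hfin.biUnion hcon).subset ?_)
  rintro b ⟨⟨hb, hbac⟩, hba : b ≠ a⟩
  have hnle : ¬b ≤ a := fun h ↦ hba ((ha.le_iff_eq hb.ne_bot).1 h)
  obtain ⟨q, hq, hsup⟩ := exists_isAtom_le_and_sup_eq hac hb hnle hbac
  exact mem_biUnion hq ⟨hb, hsup ▸ le_sup_right⟩

lemma exists_isLine_infinite_atomsBelow [BoundedOrder α] [ComplementedLattice α]
    [WellFoundedLT α] [Infinite α] : ∃ u : α, IsLine u ∧ (atomsBelow u).Infinite := by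
  have : IsAtomistic α := isAtomistic_of_complementedLattice_of_isAtomic
  have htop : (atomsBelow (⊤ : α)).Infinite := by
    simpa [atomsBelow] using infinite_setOf_isAtom (α := α)
  obtain ⟨u, hu, hmin⟩ := wellFounded_lt.has_min {u : α | (atomsBelow u).Infinite} ⟨⊤, htop⟩
  obtain ⟨a, ha, hau⟩ := hu.nonempty
  obtain ⟨c, hac, rfl⟩ := IsModularLattice.exists_disjoint_and_sup_eq hau
  have hlt : c < a ⊔ c :=
    right_lt_sup.2 fun h ↦ ha.ne_bot (hac.eq_bot_of_le h)
  have hfin : (atomsBelow c).Finite := not_infinite.1 fun h ↦ hmin c h hlt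
  obtain ⟨q, ⟨hq, hqc⟩, hinf⟩ := exists_infinite_atomsBelow_sup ha hac hu hfin
  have hne : a ≠ q := (hac.mono_right hqc).ne ha.ne_bot
  exact ⟨a ⊔ q, ⟨a, q, ha, hq, hne, rfl⟩, hinf⟩

end Modular

namespace Ortholattice

variable {α : Type*} [Ortholattice α] {x y : α}

lemma compl_le_compl_iff : x′ ≤ y′ ↔ y ≤ x :=
  ⟨fun h ↦ by simpa only [compl_compl] using compl_antitone _ _ h, compl_antitone y x⟩

lemma le_compl_comm : x ≤ y′ ↔ y ≤ x′ := by
  rw [← compl_le_compl_iff, compl_compl]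

/-- Orthocomplementation as an order isomorphism onto the dual lattice, through which the library's
results on order isomorphisms yield the De Morgan laws and the duality of atoms and coatoms. -/
def complOrderIso (α : Type*) [Ortholattice α] : α ≃o αᵒᵈ where
  toFun x := OrderDual.toDual (x′)
  invFun x := ((OrderDual.ofDual x)′)
  left_inv := compl_compl
  right_inv := compl_compl (α := α)
  map_rel_iff' := compl_le_compl_iff

lemma compl_bot : (⊥ : α)′ = ⊤ := (complOrderIso α).map_bot

lemma compl_top : (⊤ : α)′ = ⊥ := (complOrderIso α).map_top

lemma compl_inf (x y : α) : (x ⊓ y)′ = x′ ⊔ y′ := (complOrderIso α).map_inf x y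

lemma eq_bot_of_le_compl_self (h : x ≤ x′) : x = ⊥ := by
  rw [← inf_compl x, inf_eq_left.2 h]

instance : ComplementedLattice α where
  exists_isCompl x := ⟨x′, .of_eq (inf_compl x) (sup_compl x)⟩

lemma isCoatom_compl (hx : IsAtom x) : IsCoatom x′ :=
  isAtom_dual_iff_isCoatom.1 (((complOrderIso α).isAtom_iff x).2 hx)

lemma sup_compl_eq_top_of_isAtom (hy : IsAtom y) (h : ¬x ≤ y′) : x ⊔ y′ = ⊤ :=
  ((isCoatom_compl hy).not_le_iff_codisjoint.1 h).symm.eq_top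

/-- The (upper) commutator of `x` and `y`, which in an orthomodular lattice is `⊥` exactly when
`x` and `y` commute. It separates equal elements from non-orthogonal distinct atoms. -/
def comm (x y : α) : α := (x ⊔ y) ⊓ (x ⊔ y′) ⊓ ((x′ ⊔ y) ⊓ (x′ ⊔ y′))

lemma comm_comm (x y : α) : comm x y = comm y x := by
  simp only [comm, sup_comm, inf_left_comm, inf_assoc]

lemma comm_self (x : α) : comm x x = ⊥ := by
  simp only [comm, sup_idem, sup_compl, inf_top_eq, sup_comm x′ x, top_inf_eq, inf_compl]

lemma comm_eq_sup_of_isAtom (hx : IsAtom x) (hy : IsAtom y) (hxy : x ≠ y) (h : ¬x ≤ y′) :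
    comm x y = x ⊔ y := by
  have hxy' : x ⊔ y′ = ⊤ := sup_compl_eq_top_of_isAtom hy h
  have hx'y : x′ ⊔ y = ⊤ := by
    rw [sup_comm]
    exact sup_compl_eq_top_of_isAtom hx (le_compl_comm.not.1 h)
  have hx'y' : x′ ⊔ y′ = ⊤ := by
    rw [← compl_inf, (hx.disjoint_of_ne hy hxy).eq_bot, compl_bot]
  simp only [comm, hxy', hx'y, hx'y', inf_top_eq]

end Ortholattice

namespace IsLine

variable {α : Type*} [Ortholattice α] [IsModularLattice α] {u x : α}

lemma subsingleton_orthogonal_atomsBelow (hu : IsLine u) (hx : x ∈ atomsBelow u) :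
    {y ∈ atomsBelow u | y ≤ x′}.Subsingleton := by
  rintro y ⟨hy, hyx⟩ z ⟨hz, hzx⟩
  by_contra hyz
  have hxx : x ≤ x′ := by
    calc x ≤ u := hx.2
      _ = y ⊔ z := (hu.sup_eq hy hz hyz).symm
      _ ≤ x′ := sup_le hyx hzx
  exact hx.1.ne_bot (Ortholattice.eq_bot_of_le_compl_self hxx)

lemma exists_seq_comm_eq (hu : IsLine u) (hinf : (atomsBelow u).Infinite) :
    ∃ f : ℕ → α, ∀ i j, i ≠ j → Ortholattice.comm (f i) (f j) = u := by
  let R (x y : α) : Prop := Ortholattice.comm x y = u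
  have : Std.Symm R := ⟨fun x y h ↦ (Ortholattice.comm_comm y x).trans h⟩
  obtain ⟨f, -, hf⟩ := exists_seq_of_forall_finset_exists' (· ∈ atomsBelow u) R fun s hs ↦ by
    have hbad : (s ∪ ⋃ x ∈ s, {y ∈ atomsBelow u | y ≤ x′} : Set α).Finite :=
      s.finite_toSet.union <| s.finite_toSet.biUnion fun x hx ↦
        (hu.subsingleton_orthogonal_atomsBelow (hs x hx)).finite
    obtain ⟨y, hy, hgood⟩ := (hinf.sdiff hbad).nonempty
    refine ⟨y, hy, fun x hx ↦ ?_⟩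
    have hxy : x ≠ y := by
      rintro rfl
      exact hgood (.inl hx)
    have hnle : ¬x ≤ y′ := fun h ↦
      hgood (.inr (mem_biUnion hx ⟨hy, Ortholattice.le_compl_comm.1 h⟩))
    exact (Ortholattice.comm_eq_sup_of_isAtom (hs x hx).1 hy.1 hxy hnle).trans
      (hu.sup_eq (hs x hx) hy hxy)
  exact ⟨f, fun i j hij ↦ hf hij⟩

end IsLine

namespace OLTerm

/-- The commutator `Ortholattice.comm` as a term, with which a tautology test can tell equal
variables apart from non-orthogonal distinct atoms. -/
def comm (s t : OLTerm) : OLTerm :=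
  inf (inf (sup s t) (sup s t.compl)) (inf (sup s.compl t) (sup s.compl t.compl))

/-- The meet of a finite family of terms, applied to the commutators of all pairs from a finite set
of variables. It is bracketed in the order of `Finset.toList`; only its value, given by
`OLTerm.eval_finsetInf`, is independent of that choice. -/
noncomputable def finsetInf {ι : Type*} (s : Finset ι) (t : ι → OLTerm) : OLTerm :=
  s.toList.foldr (fun i r ↦ inf (t i) r) one

variable {α : Type*} [Ortholattice α] (v : ℕ → α)

lemma eval_comm (s t : OLTerm) : (comm s t).eval v = Ortholattice.comm (s.eval v) (t.eval v) :=
  rfl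

lemma eval_finsetInf {ι : Type*} (s : Finset ι) (t : ι → OLTerm) :
    (finsetInf s t).eval v = s.inf fun i ↦ (t i).eval v := by
  have eval_foldr (l : List ι) : (l.foldr (fun i r ↦ inf (t i) r) one).eval v =
      l.foldr (fun i r ↦ (t i).eval v ⊓ r) ⊤ := by
    induction l with
    | nil => rfl
    | cons i l ih => exact congrArg ((t i).eval v ⊓ ·) ih
  rw [finsetInf, eval_foldr, Finset.inf_def, ← Finset.coe_toList s, Multiset.map_coe,
    Multiset.inf_coe, List.foldr_map]

end OLTerm

lemma IsUniversalTestSet.inf_comm_eq_bot {α : Type*} [Ortholattice α] {T : Set α}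
    (hT : IsUniversalTestSet α T) (hfin : T.Finite) (v : ℕ → α) :
    ((Finset.range (T.ncard + 1)).offDiag.inf fun p ↦ Ortholattice.comm (v p.1) (v p.2)) = ⊥ := by
  let t : OLTerm :=
    .finsetInf (Finset.range (T.ncard + 1)).offDiag fun p ↦ .comm (.var p.1) (.var p.2)
  have eval_t (w : ℕ → α) : t.eval w =
      (Finset.range (T.ncard + 1)).offDiag.inf fun p ↦ Ortholattice.comm (w p.1) (w p.2) := by
    simp only [t, OLTerm.eval_finsetInf, OLTerm.eval_comm, OLTerm.eval]
  have eval_t_eq_bot (w : ℕ → α) (hw : ∀ i, w i ∈ T) : t.eval w = ⊥ := by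
    obtain ⟨i, hi, j, hj, hij, hwij⟩ := Finset.exists_ne_map_eq_of_card_lt_of_maps_to
      (s := Finset.range (T.ncard + 1)) (t := hfin.toFinset) (f := w)
      (by simp [ncard_eq_toFinset_card T hfin]) fun i _ ↦ hfin.mem_toFinset.2 (hw i)
    rw [eval_t, ← le_bot_iff, ← Ortholattice.comm_self (w j)]
    refine (Finset.inf_le (b := (i, j)) (Finset.mem_offDiag.2 ⟨hi, hj, hij⟩)).trans_eq ?_
    rw [hwij]
  have tautology : IsTautology α t.compl := hT t.compl fun w hw ↦ by
    rw [OLTerm.eval, eval_t_eq_bot w hw, Ortholattice.compl_bot]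
  rw [← eval_t, ← Ortholattice.compl_compl (t.eval v), show (t.eval v)′ = ⊤ from tautology v,
    Ortholattice.compl_top]

/-- An infinite modular ortholattice of finite dimension does not admit a finite
universal test set. -/
theorem stmt0 (α : Type*) [Ortholattice α] [IsModularLattice α] [Infinite α]
    (d : ℕ) (hdim : HasDim α d) :
    ¬ ∃ T : Set α, T.Finite ∧ IsUniversalTestSet α T := by
  rintro ⟨T, hfin, hT⟩
  have : WellFoundedLT α := hdim.wellFoundedLT
  obtain ⟨u, hu, hinf⟩ := exists_isLine_infinite_atomsBelow (α := α)
  obtain ⟨f, hf⟩ := hu.exists_seq_comm_eq hinf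
  refine hu.ne_bot (le_bot_iff.1 ?_)
  rw [← hT.inf_comm_eq_bot hfin f]
  exact Finset.le_inf fun p hp ↦ (hf p.1 p.2 (Finset.mem_offDiag.1 hp).2.2).ge
end

section
/- Let 𝕜 be ℝ or ℂ (with standard inner product) and let m ≤ N be positive integers. Every ortholattice tautology of the ortholattice L(𝕜^N) of all linear subspaces of 𝕜^N (with orthogonal complement) is a tautology of L(𝕜^m). -/
/-- Evaluation of an ortholattice term in the ortholattice of all linear subspaces of an
inner product space: meet = intersection, join = sum, ' = orthogonal complement,
0 = zero subspace, 1 = whole space. -/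
noncomputable def OLTerm.evalSub {𝕜 : Type*} [RCLike 𝕜] {H : Type*} [NormedAddCommGroup H]
    [InnerProductSpace 𝕜 H] (v : ℕ → Submodule 𝕜 H) : OLTerm → Submodule 𝕜 H
  | var i => v i
  | zero => ⊥
  | one => ⊤
  | inf t s => t.evalSub v ⊓ s.evalSub v
  | sup t s => t.evalSub v ⊔ s.evalSub v
  | compl t => (t.evalSub v)ᗮ

/-!
If `E` embeds isometrically in `H` and its image has an orthogonal projection, then `H` is the
Hilbert sum of `E` and the orthogonal complement `F` of the image. The map `(U, V) ↦ U ⊕ V` from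
`L(E) × L(F)` to `L(E ⊕ F)` preserves all ortholattice operations, including the bounds, so the
value of a term at `Uᵢ ⊕ Vᵢ` is the sum of its values at `Uᵢ` and at `Vᵢ`; if the former is
everything, so is each summand.
-/

open Module

section L2Prod

variable {𝕜 E F : Type*} [RCLike 𝕜] [NormedAddCommGroup E] [InnerProductSpace 𝕜 E]
  [NormedAddCommGroup F] [InnerProductSpace 𝕜 F]

/-- The orthogonal direct sum of subspaces `U` of `E` and `V` of `F`, as a subspace of the
Hilbert sum `WithLp 2 (E × F)`. -/
def l2Prod (U : Submodule 𝕜 E) (V : Submodule 𝕜 F) : Submodule 𝕜 (WithLp 2 (E × F)) :=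
  (U.prod V).comap (WithLp.linearEquiv 2 𝕜 (E × F)).toLinearMap

theorem mem_l2Prod {U : Submodule 𝕜 E} {V : Submodule 𝕜 F} {x : WithLp 2 (E × F)} :
    x ∈ l2Prod U V ↔ x.fst ∈ U ∧ x.snd ∈ V :=
  Iff.rfl

theorem l2Prod_bot : l2Prod (⊥ : Submodule 𝕜 E) (⊥ : Submodule 𝕜 F) = ⊥ := by
  rw [l2Prod, Submodule.prod_bot, Submodule.comap_bot, LinearEquiv.ker]

theorem l2Prod_top : l2Prod (⊤ : Submodule 𝕜 E) (⊤ : Submodule 𝕜 F) = ⊤ := by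
  rw [l2Prod, Submodule.prod_top, Submodule.comap_top]

theorem l2Prod_eq_top_iff {U : Submodule 𝕜 E} {V : Submodule 𝕜 F} :
    l2Prod U V = ⊤ ↔ U = ⊤ ∧ V = ⊤ := by
  simp only [Submodule.eq_top_iff', mem_l2Prod]
  exact ⟨fun h ↦ ⟨fun x ↦ (h (.toLp 2 (x, 0))).1, fun y ↦ (h (.toLp 2 (0, y))).2⟩,
    fun h x ↦ ⟨h.1 x.fst, h.2 x.snd⟩⟩

theorem l2Prod_inf (U U' : Submodule 𝕜 E) (V V' : Submodule 𝕜 F) :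
    l2Prod (U ⊓ U') (V ⊓ V') = l2Prod U V ⊓ l2Prod U' V' := by
  simp only [l2Prod, ← Submodule.prod_inf_prod, Submodule.comap_inf]

theorem l2Prod_sup (U U' : Submodule 𝕜 E) (V V' : Submodule 𝕜 F) :
    l2Prod (U ⊔ U') (V ⊔ V') = l2Prod U V ⊔ l2Prod U' V' := by
  simp only [l2Prod, ← Submodule.prod_sup_prod, Submodule.comap_equiv_eq_map_symm,
    Submodule.map_sup]

theorem l2Prod_orthogonal (U : Submodule 𝕜 E) (V : Submodule 𝕜 F) :
    l2Prod Uᗮ Vᗮ = (l2Prod U V)ᗮ := by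
  ext x
  simp only [mem_l2Prod, Submodule.mem_orthogonal, WithLp.prod_inner_apply]
  constructor
  · rintro ⟨hU, hV⟩ y ⟨hyU, hyV⟩
    exact (congrArg₂ (· + ·) (hU _ hyU) (hV _ hyV)).trans (add_zero 0)
  · intro h
    constructor
    · intro u hu
      simpa using h (.toLp 2 (u, 0)) ⟨hu, V.zero_mem⟩
    · intro w hw
      simpa using h (.toLp 2 (0, w)) ⟨U.zero_mem, hw⟩

end L2Prod

theorem nonempty_linearIsometry_of_finrank_le {𝕜 E H : Type*} [RCLike 𝕜]
    [NormedAddCommGroup E] [InnerProductSpace 𝕜 E] [FiniteDimensional 𝕜 E]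
    [NormedAddCommGroup H] [InnerProductSpace 𝕜 H] [FiniteDimensional 𝕜 H]
    (h : finrank 𝕜 E ≤ finrank 𝕜 H) : Nonempty (E →ₗᵢ[𝕜] H) := by
  let b := stdOrthonormalBasis 𝕜 E
  let c := stdOrthonormalBasis 𝕜 H
  let f : E →ₗ[𝕜] H := b.toBasis.constr 𝕜 (c ∘ Fin.castLE h)
  have hb : Orthonormal 𝕜 b.toBasis := by simp
  have hf : f ∘ b.toBasis = c ∘ Fin.castLE h := funext (b.toBasis.constr_basis 𝕜 _)
  exact ⟨f.isometryOfOrthonormal hb (hf ▸ c.orthonormal.comp _ (Fin.castLE_injective h))⟩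

namespace OLTerm

variable {𝕜 E F H : Type*} [RCLike 𝕜] [NormedAddCommGroup E] [InnerProductSpace 𝕜 E]
  [NormedAddCommGroup F] [InnerProductSpace 𝕜 F] [NormedAddCommGroup H] [InnerProductSpace 𝕜 H]

variable (𝕜 H) in
/-- The term `t` is a tautology of the ortholattice of all (not necessarily closed) linear
subspaces of the inner product space `H`. -/
def IsTautology (t : OLTerm) : Prop :=
  ∀ v : ℕ → Submodule 𝕜 H, t.evalSub v = ⊤

theorem evalSub_map (e : E ≃ₗᵢ[𝕜] H) (v : ℕ → Submodule 𝕜 E) (t : OLTerm) :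
    t.evalSub (fun i ↦ (v i).map (e.toLinearEquiv : E →ₗ[𝕜] H)) =
      (t.evalSub v).map (e.toLinearEquiv : E →ₗ[𝕜] H) := by
  induction t with
  | var i => rfl
  | zero => exact (Submodule.map_bot _).symm
  | one => exact ((Submodule.map_top _).trans e.toLinearEquiv.range).symm
  | inf t s iht ihs =>
    simp only [evalSub, iht, ihs, Submodule.map_inf _ e.toLinearEquiv.injective]
  | sup t s iht ihs => simp only [evalSub, iht, ihs, Submodule.map_sup]
  | compl t iht => simp only [evalSub, iht, Submodule.map_orthogonal_equiv]

theorem evalSub_l2Prod (v : ℕ → Submodule 𝕜 E) (w : ℕ → Submodule 𝕜 F) (t : OLTerm) :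
    t.evalSub (fun i ↦ l2Prod (v i) (w i)) = l2Prod (t.evalSub v) (t.evalSub w) := by
  induction t with
  | var i => rfl
  | zero => exact l2Prod_bot.symm
  | one => exact l2Prod_top.symm
  | inf t s iht ihs => simp only [evalSub, iht, ihs, l2Prod_inf]
  | sup t s iht ihs => simp only [evalSub, iht, ihs, l2Prod_sup]
  | compl t iht => simp only [evalSub, iht, l2Prod_orthogonal]

namespace IsTautology

variable {t : OLTerm}

theorem of_linearIsometryEquiv (e : E ≃ₗᵢ[𝕜] H) (ht : t.IsTautology 𝕜 H) :
    t.IsTautology 𝕜 E := by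
  intro v
  have hmap : (t.evalSub v).map (e.toLinearEquiv : E →ₗ[𝕜] H) = ⊤ := by
    rw [← evalSub_map, ht]
  exact (Submodule.map_eq_top_iff (e := e.toLinearEquiv)).1 hmap

theorem of_withLp_prod (ht : t.IsTautology 𝕜 (WithLp 2 (E × F))) : t.IsTautology 𝕜 E := by
  intro v
  have hprod : l2Prod (t.evalSub v) (t.evalSub fun _ ↦ (⊥ : Submodule 𝕜 F)) = ⊤ := by
    rw [← evalSub_l2Prod, ht]
  exact (l2Prod_eq_top_iff.1 hprod).1

theorem submodule (ht : t.IsTautology 𝕜 H) (K : Submodule 𝕜 H) [K.HasOrthogonalProjection] :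
    t.IsTautology 𝕜 K :=
  (ht.of_linearIsometryEquiv K.orthogonalDecomposition.symm).of_withLp_prod

end IsTautology

end OLTerm

theorem stmt13_general {𝕜 E H : Type*} [RCLike 𝕜] [NormedAddCommGroup E]
    [InnerProductSpace 𝕜 E] [NormedAddCommGroup H] [InnerProductSpace 𝕜 H] (f : E →ₗᵢ[𝕜] H)
    [f.range.HasOrthogonalProjection] {t : OLTerm} (ht : t.IsTautology 𝕜 H) :
    t.IsTautology 𝕜 E :=
  (ht.submodule f.range).of_linearIsometryEquiv f.equivRange

/-- Let `𝕜` be `ℝ` or `ℂ` and `m ≤ N` positive integers.  Every ortholattice tautology of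
the subspace ortholattice `L(𝕜^N)` is a tautology of `L(𝕜^m)`. -/
theorem stmt13 (𝕜 : Type*) [RCLike 𝕜] (m N : ℕ) (hm : 0 < m) (hmN : m ≤ N) (t : OLTerm)
    (htaut : ∀ v : ℕ → Submodule 𝕜 (EuclideanSpace 𝕜 (Fin N)), t.evalSub v = ⊤) :
    ∀ v : ℕ → Submodule 𝕜 (EuclideanSpace 𝕜 (Fin m)), t.evalSub v = ⊤ := by
  obtain ⟨f⟩ := nonempty_linearIsometry_of_finrank_le (𝕜 := 𝕜) (E := EuclideanSpace 𝕜 (Fin m))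
    (H := EuclideanSpace 𝕜 (Fin N)) (by simpa only [finrank_euclideanSpace_fin] using hmN)
  exact stmt13_general f htaut
end

section
/- Let 𝔽 be the field of real algebraic numbers, viewed as a subfield of ℝ, and let m be a positive integer. An ortholattice term t is a tautology of the ortholattice L(𝔽^m) of all 𝔽-linear subspaces of 𝔽^m (with orthogonal complement for the standard bilinear form) if and only if t is a tautology of the ortholattice L(ℝ^m) of all linear subspaces of ℝ^m (with orthogonal complement for the standard inner product). -/
set_option synthInstance.maxHeartbeats 1000000

/-- The field of real algebraic numbers, viewed as a subfield of `ℝ`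
(the relative algebraic closure of `ℚ` in `ℝ`). -/
noncomputable abbrev RealAlg : Type := algebraicClosure ℚ ℝ

/-- The orthogonal complement of a subspace of `F^m` with respect to the standard
bilinear form `⟨x, y⟩ = ∑ xᵢ yᵢ`. -/
def orthF {F : Type*} [Field F] {m : ℕ} (U : Submodule F (Fin m → F)) :
    Submodule F (Fin m → F) where
  carrier := {y | ∀ x ∈ U, ∑ i, x i * y i = 0}
  add_mem' := by
    intro p q hp hq x hx
    simp only [Pi.add_apply, mul_add, Finset.sum_add_distrib, hp x hx, hq x hx, add_zero]
  zero_mem' := by intro x hx; simp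
  smul_mem' := by
    intro c p hp x hx
    simp only [Pi.smul_apply, smul_eq_mul, mul_left_comm, ← Finset.mul_sum, hp x hx, mul_zero]

/-- Evaluation of an ortholattice term in the ortholattice `L(F^m)` of all linear
subspaces of `F^m`, with ' interpreted as the orthogonal complement for the standard
bilinear form. -/
def OLTerm.evalF {F : Type*} [Field F] {m : ℕ} (v : ℕ → Submodule F (Fin m → F)) :
    OLTerm → Submodule F (Fin m → F)
  | var i => v i
  | zero => ⊥
  | one => ⊤
  | inf t s => t.evalF v ⊓ s.evalF v
  | sup t s => t.evalF v ⊔ s.evalF v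
  | compl t => orthF (t.evalF v)

/-!
A valuation of a term in `L(K^m)` involves finitely many subspaces. Over a sufficiently large
finitely generated subring `A` of `K` they have bases with a left inverse, so a homomorphism
`φ : A →+* L` turns them into subspaces of `L^m` of the same dimensions, compatibly with the lattice
operations and the orthogonal complement. Hence a tautology of `L(L^m)` is one of `L(K^m)` as soon
as every finitely generated subring of `K` maps to `L`.

Finitely generated subrings of `𝔽` map to `ℝ` by inclusion. A finitely generated subring of `ℝ` maps
to `𝔽` because each homomorphism `θ : ℤ[X₁, …, Xₙ] →+* ℝ` is a pointwise limit of homomorphisms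
`φ k` to `𝔽` such that each relation `θ r = 0` holds for `φ k` from some `k` on; as `ker θ` is
finitely generated, some `φ k` kills it. The variables are handled one at a time: if `θ Xₙ` is
transcendental over the previous values, it is approximated by rational numbers; if it is algebraic,
it is a simple root of its minimal polynomial, hence the limit of roots of the perturbed
polynomials, and these roots are again algebraic.
-/

open Filter Module Topology

section Specialization

open Matrix

variable {K L : Type*} [Field K] [Field L] {ι κ : Type*} {m : ℕ}

/-- The specialization of a subspace `U` of `K^ι` along a homomorphism `φ` from a subring `A` of `K`
to `L`: the subspace of `L^ι` spanned by the images of the `A`-points of `U`. It carries valuations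
of terms in `L(K^m)` to valuations in `L(L^m)`. -/
def specialization {A : Subring K} (φ : A →+* L) (U : Submodule K (ι → K)) :
    Submodule L (ι → L) :=
  Submodule.span L ((φ ∘ ·) '' {x : ι → A | A.subtype ∘ x ∈ U})

section Subring

variable {A : Subring K} (φ : A →+* L)

theorem comp_mem_specialization {U : Submodule K (ι → K)} {x : ι → A} (hx : A.subtype ∘ x ∈ U) :
    φ ∘ x ∈ specialization φ U :=
  Submodule.subset_span ⟨x, hx, rfl⟩

theorem specialization_le_iff {U : Submodule K (ι → K)} {V : Submodule L (ι → L)} :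
    specialization φ U ≤ V ↔ ∀ x : ι → A, A.subtype ∘ x ∈ U → φ ∘ x ∈ V :=
  Submodule.span_le.trans Set.image_subset_iff

theorem specialization_mono : Monotone (specialization φ (ι := ι)) := fun _ _ hUW =>
  (specialization_le_iff φ).mpr fun _ hx => comp_mem_specialization φ (hUW hx)

theorem specialization_range_mulVecLin [Fintype ι] [Fintype κ] [DecidableEq κ]
    {B : Matrix ι κ A} {C : Matrix κ ι A} (hCB : C * B = 1) :
    specialization φ (LinearMap.range (B.map A.subtype).mulVecLin) =
      LinearMap.range (B.map φ).mulVecLin := by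
  apply le_antisymm
  · rw [specialization_le_iff]
    rintro x ⟨c, hc⟩
    have hc' : A.subtype ∘ (C *ᵥ x) = c := by
      have hCB' : C.map A.subtype * B.map A.subtype = 1 := by
        rw [← Matrix.map_mul, hCB, Matrix.map_one _ (map_zero _) (map_one _)]
      ext k
      rw [Function.comp_apply, RingHom.map_mulVec, ← hc, mulVecLin_apply, mulVec_mulVec, hCB',
        one_mulVec]
    have hx : B *ᵥ (C *ᵥ x) = x := by
      ext i
      rw [← A.subtype_apply, RingHom.map_mulVec, hc']
      exact congrFun hc i
    refine ⟨φ ∘ (C *ᵥ x), ?_⟩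
    ext i
    rw [mulVecLin_apply, ← RingHom.map_mulVec, hx, Function.comp_apply]
  · rw [range_mulVecLin, Submodule.span_le]
    rintro _ ⟨k, rfl⟩
    refine comp_mem_specialization φ (x := B.col k) ?_
    rw [range_mulVecLin]
    exact Submodule.subset_span ⟨k, rfl⟩

theorem specialization_orthF_le (U : Submodule K (Fin m → K)) :
    specialization φ (orthF U) ≤ orthF (specialization φ U) := by
  rw [specialization_le_iff]
  intro y hy x hx
  change x ⬝ᵥ (φ ∘ y) = 0
  induction hx using Submodule.span_induction with
  | mem x hx =>
    obtain ⟨x, hx, rfl⟩ := hx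
    have hxy : x ⬝ᵥ y = 0 := by
      refine A.subtype_injective ?_
      rw [RingHom.map_dotProduct, map_zero]
      exact hy _ hx
    rw [← RingHom.map_dotProduct, hxy, map_zero]
  | zero => exact zero_dotProduct _
  | add x x' _ _ hx hx' => rw [add_dotProduct, hx, hx', add_zero]
  | smul c x _ hx => rw [smul_dotProduct, hx, smul_zero]

theorem specialization_inf_of_sup [Finite ι] {U W : Submodule K (ι → K)}
    (hU : finrank L (specialization φ U) = finrank K U)
    (hW : finrank L (specialization φ W) = finrank K W)
    (hinf : finrank L (specialization φ (U ⊓ W)) = finrank K ↥(U ⊓ W))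
    (hsup : finrank L (specialization φ (U ⊔ W)) = finrank K ↥(U ⊔ W))
    (h : specialization φ (U ⊔ W) = specialization φ U ⊔ specialization φ W) :
    specialization φ (U ⊓ W) = specialization φ U ⊓ specialization φ W := by
  have hdimK := Submodule.finrank_sup_add_finrank_inf_eq U W
  have hdimL := Submodule.finrank_sup_add_finrank_inf_eq
    (specialization φ U) (specialization φ W)
  rw [← h] at hdimL
  exact Submodule.eq_of_le_of_finrank_eq ((specialization_mono φ).map_inf_le U W) (by lia)

end Subring

theorem rank_eq_card_of_mul_eq_one [Fintype ι] [Fintype κ] [DecidableEq κ]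
    {B : Matrix ι κ K} {C : Matrix κ ι K} (hCB : C * B = 1) : B.rank = Fintype.card κ := by
  refine le_antisymm B.rank_le_card_width ?_
  rw [← rank_one (R := K), ← hCB]
  exact rank_mul_le_right C B

theorem exists_leftInvertible_range_mulVecLin_eq [Fintype ι] (U : Submodule K (ι → K)) :
    ∃ (r : ℕ) (B : Matrix ι (Fin r) K) (C : Matrix (Fin r) ι K),
      C * B = 1 ∧ LinearMap.range B.mulVecLin = U := by
  classical
  let e := (finBasis K U).equivFun.symm
  let f : (Fin (finrank K U) → K) →ₗ[K] (ι → K) := U.subtype ∘ₗ e.toLinearMap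
  have hf : LinearMap.ker f = ⊥ :=
    LinearMap.ker_eq_bot.mpr (U.subtype_injective.comp e.injective)
  obtain ⟨g, hg⟩ := f.exists_leftInverse_of_injective hf
  refine ⟨finrank K U, f.toMatrix', g.toMatrix', ?_, ?_⟩
  · rw [← LinearMap.toMatrix'_comp, hg, LinearMap.toMatrix'_id]
  · rw [← toLin'_apply', toLin'_toMatrix', LinearMap.range_comp, LinearEquiv.range,
      Submodule.map_top, U.range_subtype]

theorem exists_range_mulVecLin_sup_eq [Fintype ι] (U W : Submodule K (ι → K)) :
    ∃ (r : ℕ) (B₁ B₂ : Matrix ι (Fin r) K) (C : Matrix (Fin r) ι K), C * (B₁ + B₂) = 1 ∧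
      LinearMap.range (B₁ + B₂).mulVecLin = U ⊔ W ∧ (∀ k, B₁.col k ∈ U) ∧ ∀ k, B₂.col k ∈ W := by
  obtain ⟨r, B, C, hCB, hB⟩ := exists_leftInvertible_range_mulVecLin_eq (U ⊔ W)
  have hcol (k : Fin r) : ∃ u ∈ U, ∃ w ∈ W, u + w = B.col k := by
    rw [← Submodule.mem_sup, ← hB, range_mulVecLin]
    exact Submodule.subset_span ⟨k, rfl⟩
  choose u hu w hw huw using hcol
  have hadd : (of u)ᵀ + (of w)ᵀ = B := by
    ext i k
    exact congrFun (huw k) i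
  refine ⟨r, (of u)ᵀ, (of w)ᵀ, C, ?_, ?_, hu, hw⟩
  · rw [hadd, hCB]
  · rw [hadd, hB]

theorem finrank_orthF (U : Submodule K (Fin m → K)) : finrank K (orthF U) = m - finrank K U := by
  let b : LinearMap.BilinForm K (Fin m → K) := dotProductBilin K K
  have hb : b.Nondegenerate :=
    ⟨dotProduct_eq_zero, fun y hy =>
      dotProduct_eq_zero y fun x => (dotProduct_comm y x).trans (hy x)⟩
  have hU : orthF U = b.orthogonal U := rfl
  rw [hU, LinearMap.BilinForm.finrank_orthogonal hb, finrank_fin_fun]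

theorem eventually_exists_map_subtype_eq [Finite ι] [Finite κ] (B : Matrix ι κ K) :
    ∀ᶠ S : Finset K in atTop, ∃ B' : Matrix ι κ (Subring.closure (S : Set K)),
      B'.map (Subring.subtype _) = B := by
  classical
  have := Fintype.ofFinite (ι × κ)
  filter_upwards [eventually_ge_atTop (Finset.univ.image fun p : ι × κ => B p.1 p.2)] with S hS
  have hB (i j) : B i j ∈ Subring.closure (S : Set K) :=
    Subring.subset_closure (hS (Finset.mem_image_of_mem _ (Finset.mem_univ (i, j))))
  exact ⟨fun i j => ⟨B i j, hB i j⟩, rfl⟩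

theorem mul_eq_one_of_map_subtype {A : Subring K} [Fintype ι] [DecidableEq κ]
    {B : Matrix ι κ A} {C : Matrix κ ι A} (h : C.map A.subtype * B.map A.subtype = 1) :
    C * B = 1 := by
  refine Matrix.map_injective A.subtype_injective ?_
  rw [← Matrix.map_one A.subtype (map_zero _) (map_one _), ← Matrix.map_mul] at h
  exact h

variable (L) in
theorem eventually_finrank_specialization [Finite ι] (U : Submodule K (ι → K)) :
    ∀ᶠ S : Finset K in atTop, ∀ φ : Subring.closure (S : Set K) →+* L,
      finrank L (specialization φ U) = finrank K U := by
  have := Fintype.ofFinite ι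
  obtain ⟨r, B, C, hCB, rfl⟩ := exists_leftInvertible_range_mulVecLin_eq U
  filter_upwards [eventually_exists_map_subtype_eq B, eventually_exists_map_subtype_eq C]
  rintro S ⟨B, rfl⟩ ⟨C, rfl⟩ φ
  have hCB' : C * B = 1 := mul_eq_one_of_map_subtype hCB
  have hCBφ : C.map φ * B.map φ = 1 := by
    rw [← Matrix.map_mul, hCB', Matrix.map_one _ (map_zero _) (map_one _)]
  rw [specialization_range_mulVecLin φ hCB']
  exact (rank_eq_card_of_mul_eq_one hCBφ).trans (rank_eq_card_of_mul_eq_one hCB).symm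

variable (L) in
theorem eventually_specialization_sup [Finite ι] (U W : Submodule K (ι → K)) :
    ∀ᶠ S : Finset K in atTop, ∀ φ : Subring.closure (S : Set K) →+* L,
      specialization φ (U ⊔ W) = specialization φ U ⊔ specialization φ W := by
  have := Fintype.ofFinite ι
  obtain ⟨r, B₁, B₂, C, hCB, hrange, hU, hW⟩ := exists_range_mulVecLin_sup_eq U W
  filter_upwards [eventually_exists_map_subtype_eq B₁, eventually_exists_map_subtype_eq B₂,
    eventually_exists_map_subtype_eq C]
  rintro S ⟨B₁, rfl⟩ ⟨B₂, rfl⟩ ⟨C, rfl⟩ φ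
  refine le_antisymm ?_ ((specialization_mono φ).le_map_sup U W)
  rw [← Matrix.map_add _ (map_add _)] at hCB hrange
  rw [← hrange, specialization_range_mulVecLin φ (mul_eq_one_of_map_subtype hCB),
    Matrix.map_add _ (map_add φ), range_mulVecLin, Submodule.span_le]
  rintro _ ⟨k, rfl⟩
  exact Submodule.add_mem_sup (comp_mem_specialization φ (x := B₁.col k) (hU k))
    (comp_mem_specialization φ (x := B₂.col k) (hW k))

variable (L) in
theorem eventually_specialization_inf [Finite ι] (U W : Submodule K (ι → K)) :
    ∀ᶠ S : Finset K in atTop, ∀ φ : Subring.closure (S : Set K) →+* L,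
      specialization φ (U ⊓ W) = specialization φ U ⊓ specialization φ W := by
  filter_upwards [eventually_finrank_specialization L U, eventually_finrank_specialization L W,
    eventually_finrank_specialization L (U ⊓ W), eventually_finrank_specialization L (U ⊔ W),
    eventually_specialization_sup L U W] with S hU hW hinf hsup h φ
  exact specialization_inf_of_sup φ (hU φ) (hW φ) (hinf φ) (hsup φ) (h φ)

variable (L) in
theorem eventually_specialization_orthF (U : Submodule K (Fin m → K)) :
    ∀ᶠ S : Finset K in atTop, ∀ φ : Subring.closure (S : Set K) →+* L,
      specialization φ (orthF U) = orthF (specialization φ U) := by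
  filter_upwards [eventually_finrank_specialization L U,
    eventually_finrank_specialization L (orthF U)] with S hU horth φ
  refine Submodule.eq_of_le_of_finrank_eq (specialization_orthF_le φ U) ?_
  rw [horth, finrank_orthF, finrank_orthF, hU]

variable (L) in
theorem OLTerm.eventually_evalF_specialization (v : ℕ → Submodule K (Fin m → K)) (t : OLTerm) :
    ∀ᶠ S : Finset K in atTop, ∀ φ : Subring.closure (S : Set K) →+* L,
      t.evalF (fun k => specialization φ (v k)) = specialization φ (t.evalF v) := by
  induction t with
  | var k => exact .of_forall fun _ _ => rfl
  | zero =>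
    filter_upwards [eventually_finrank_specialization L (⊥ : Submodule K (Fin m → K))] with S h φ
    exact (Submodule.finrank_eq_zero.mp ((h φ).trans (finrank_bot K _))).symm
  | one =>
    filter_upwards [eventually_finrank_specialization L (⊤ : Submodule K (Fin m → K))] with S h φ
    exact (Submodule.eq_top_of_finrank_eq ((h φ).trans (by simp))).symm
  | inf t s iht ihs =>
    filter_upwards [iht, ihs, eventually_specialization_inf L (t.evalF v) (s.evalF v)]
      with S ht hs hts φ
    rw [evalF, evalF, ht, hs, hts φ]
  | sup t s iht ihs =>
    filter_upwards [iht, ihs, eventually_specialization_sup L (t.evalF v) (s.evalF v)]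
      with S ht hs hts φ
    rw [evalF, evalF, ht, hs, hts φ]
  | compl t iht =>
    filter_upwards [iht, eventually_specialization_orthF L (t.evalF v)] with S ht horth φ
    rw [evalF, evalF, ht, horth]

theorem OLTerm.evalF_eq_top_of_forall_finset {t : OLTerm}
    (hKL : ∀ S : Finset K, Nonempty (Subring.closure (S : Set K) →+* L))
    (ht : ∀ w : ℕ → Submodule L (Fin m → L), t.evalF w = ⊤) (v : ℕ → Submodule K (Fin m → K)) :
    t.evalF v = ⊤ := by
  obtain ⟨S, heval, hfinrank⟩ := ((eventually_evalF_specialization L v t).and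
    (eventually_finrank_specialization L (t.evalF v))).exists
  obtain ⟨φ⟩ := hKL S
  apply Submodule.eq_top_of_finrank_eq
  rw [← hfinrank φ, ← heval φ, ht, finrank_top, finrank_fin_fun, finrank_fin_fun]

end Specialization

section SignChange

theorem eventually_mul_neg_of_deriv_pos {f : ℝ → ℝ} {y : ℝ} (hfy : f y = 0) (hf : 0 < deriv f y) :
    ∀ᶠ d in 𝓝[>] 0, f (y - d) * f (y + d) < 0 := by
  have hsign := eventually_nhdsWithin_sign_eq_of_deriv_pos hf hfy
  have hsub : Tendsto (fun d => y - d) (𝓝[>] 0) (𝓝 y) :=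
    tendsto_nhdsWithin_of_tendsto_nhds (Continuous.tendsto' (by fun_prop) _ _ (sub_zero y))
  have hadd : Tendsto (fun d => y + d) (𝓝[>] 0) (𝓝 y) :=
    tendsto_nhdsWithin_of_tendsto_nhds (Continuous.tendsto' (by fun_prop) _ _ (add_zero y))
  filter_upwards [hsub.eventually hsign, hadd.eventually hsign, self_mem_nhdsWithin]
    with d hneg hpos (hd : 0 < d)
  rw [sub_sub_cancel_left, sign_neg (neg_neg_of_pos hd), sign_eq_neg_one_iff] at hneg
  rw [add_sub_cancel_left, sign_pos hd, sign_eq_one_iff] at hpos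
  exact mul_neg_of_neg_of_pos hneg hpos

theorem eventually_mul_neg_of_deriv_ne_zero {f : ℝ → ℝ} {y : ℝ} (hfy : f y = 0)
    (hf : deriv f y ≠ 0) : ∀ᶠ d in 𝓝[>] 0, f (y - d) * f (y + d) < 0 := by
  rcases hf.lt_or_gt with hneg | hpos
  · have := eventually_mul_neg_of_deriv_pos (f := -f) (y := y) (by simp [hfy]) (by simpa)
    simpa only [Pi.neg_apply, neg_mul_neg] using this
  · exact eventually_mul_neg_of_deriv_pos hfy hpos

theorem exists_dist_le_of_mul_neg {f : ℝ → ℝ} (hf : Continuous f) {y d : ℝ} (hd : 0 ≤ d)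
    (h : f (y - d) * f (y + d) < 0) : ∃ x, f x = 0 ∧ dist y x ≤ d := by
  have hzero : (0 : ℝ) ∈ Set.uIcc (f (y - d)) (f (y + d)) := by
    rw [Set.mem_uIcc]
    rcases mul_neg_iff.mp h with ⟨hl, hr⟩ | ⟨hl, hr⟩
    · exact .inr ⟨hr.le, hl.le⟩
    · exact .inl ⟨hl.le, hr.le⟩
  obtain ⟨x, hx, hfx⟩ := intermediate_value_uIcc hf.continuousOn hzero
  rw [Set.uIcc_of_le (by linarith), ← Real.closedBall_eq_Icc, Metric.mem_closedBall'] at hx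
  exact ⟨x, hfx, hx⟩

theorem exists_tendsto_and_eventually_eq_zero {α : Type*} {l : Filter α} {g : α → ℝ → ℝ}
    {G : ℝ → ℝ} {y : ℝ} (hg : ∀ k, Continuous (g k)) (hgG : ∀ x, Tendsto (g · x) l (𝓝 (G x)))
    (hG : ∀ᶠ d in 𝓝[>] 0, G (y - d) * G (y + d) < 0) :
    ∃ z : α → ℝ, Tendsto z l (𝓝 y) ∧ ∀ᶠ k in l, g k (z k) = 0 := by
  have hnearest (k : α) : ∃ z, ∀ x, g k x = 0 → g k z = 0 ∧ dist y z ≤ dist y x := by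
    rcases Set.eq_empty_or_nonempty {x | g k x = 0} with hempty | hne
    · exact ⟨y, fun x hx => (hempty.le hx).elim⟩
    · obtain ⟨z, hz, hdist⟩ :=
        (isClosed_singleton.preimage (hg k)).exists_infDist_eq_dist (s := {x | g k x = 0}) hne y
      exact ⟨z, fun x hx => ⟨hz, hdist ▸ Metric.infDist_le_dist_of_mem hx⟩⟩
  choose z hz using hnearest
  have hclose {ε : ℝ} (hε : 0 < ε) : ∀ᶠ k in l, g k (z k) = 0 ∧ dist y (z k) < ε := by
    obtain ⟨d, hGd, hd⟩ := (hG.and (Ioo_mem_nhdsGT hε)).exists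
    filter_upwards [((hgG (y - d)).mul (hgG (y + d))).eventually_lt_const hGd] with k hk
    obtain ⟨x, hx, hxd⟩ := exists_dist_le_of_mul_neg (hg k) hd.1.le hk
    exact ⟨(hz k x hx).1, ((hz k x hx).2.trans hxd).trans_lt hd.2⟩
  refine ⟨z, Metric.tendsto_nhds.mpr fun ε hε => ?_, (hclose one_pos).mono fun k hk => hk.1⟩
  exact (hclose hε).mono fun k hk => dist_comm y (z k) ▸ hk.2

end SignChange

section IsMinpolyAlong

open Polynomial

variable {R E : Type*} [CommRing R] [CommRing E]

/-- `f : R[X]` is, up to a nonzero factor and modulo the kernel of `θ : R →+* E`, the minimal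
polynomial of `y` over the fraction field of the image of `θ`. Working with `f` itself avoids
passing to that fraction field, to which the approximations of `θ` do not extend. -/
structure IsMinpolyAlong (θ : R →+* E) (y : E) (f : R[X]) : Prop where
  eval₂_eq_zero : f.eval₂ θ y = 0
  map_leadingCoeff_ne_zero : θ f.leadingCoeff ≠ 0
  map_eq_zero : ∀ g : R[X], g.eval₂ θ y = 0 → g.natDegree < f.natDegree → g.map θ = 0

theorem exists_isMinpolyAlong {θ : R →+* E} {y : E}
    (h : ∃ g : R[X], g.eval₂ θ y = 0 ∧ g.map θ ≠ 0) : ∃ f, IsMinpolyAlong θ y f := by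
  obtain ⟨f, ⟨hfy, hf⟩, hmin⟩ := exists_minimalFor_of_wellFoundedLT _ natDegree h
  have hmap (g : R[X]) (hgy : g.eval₂ θ y = 0) (hg : g.natDegree < f.natDegree) :
      g.map θ = 0 := by
    by_contra hgθ
    exact hg.not_ge (hmin ⟨hgy, hgθ⟩ hg.le)
  refine ⟨f, hfy, fun hlead => hf ?_, hmap⟩
  have herase : f.eraseLead.map θ = f.map θ := by
    rw [← self_sub_monomial_natDegree_leadingCoeff, Polynomial.map_sub, map_monomial, hlead,
      monomial_zero_right, sub_zero]
  rcases Nat.eq_zero_or_pos f.natDegree with hdeg | hdeg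
  · rw [leadingCoeff, hdeg] at hlead
    rw [eq_C_of_natDegree_eq_zero hdeg, map_C, hlead, C_0]
  · rw [← herase]
    refine hmap _ ?_ (f.eraseLead_natDegree_le.trans_lt (Nat.sub_one_lt_of_lt hdeg))
    rw [← eval_map, herase, eval_map, hfy]

namespace IsMinpolyAlong

variable {θ : R →+* E} {y : E} {f : R[X]}

theorem natDegree_pos (hf : IsMinpolyAlong θ y f) : 0 < f.natDegree := by
  rw [Nat.pos_iff_ne_zero]
  intro hdeg
  have hfy := hf.eval₂_eq_zero
  have hlead := hf.map_leadingCoeff_ne_zero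
  rw [eq_C_of_natDegree_eq_zero hdeg, eval₂_C] at hfy
  rw [leadingCoeff, hdeg] at hlead
  exact hlead hfy

theorem eval₂_derivative_ne_zero [IsDomain E] [CharZero E] (hf : IsMinpolyAlong θ y f) :
    f.derivative.eval₂ θ y ≠ 0 := by
  intro hy
  have hdeg := hf.natDegree_pos
  have hmap := hf.map_eq_zero _ hy (natDegree_derivative_lt hdeg.ne')
  have hcoeff : θ f.leadingCoeff * f.natDegree = 0 := by
    have := congrArg (coeff · (f.natDegree - 1)) hmap
    simpa [coeff_map, coeff_derivative, Nat.sub_add_cancel hdeg, ← Nat.cast_add_one] using this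
  exact (mul_ne_zero hf.map_leadingCoeff_ne_zero (Nat.cast_ne_zero.mpr hdeg.ne')) hcoeff

end IsMinpolyAlong

end IsMinpolyAlong

section Approximates

open Polynomial

variable {R F α : Type*} [CommRing R] [Field F] [Algebra F ℝ] {l : Filter α}

/-- The homomorphisms `φ k : R →+* F` converge to `θ : R →+* ℝ` pointwise along `l`, and eventually
satisfy each algebraic relation that `θ` satisfies. -/
structure Approximates (l : Filter α) (φ : α → R →+* F) (θ : R →+* ℝ) : Prop where
  tendsto : ∀ r, Tendsto (fun k => algebraMap F ℝ (φ k r)) l (𝓝 (θ r))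
  eventually_eq_zero : ∀ r, θ r = 0 → ∀ᶠ k in l, φ k r = 0

namespace Approximates

variable {φ : α → R →+* F} {θ : R →+* ℝ} {y : ℝ}

theorem comp {S : Type*} [CommRing S] (h : Approximates l φ θ) (e : S →+* R) :
    Approximates l (fun k => (φ k).comp e) (θ.comp e) :=
  ⟨fun s => h.tendsto (e s), fun s => h.eventually_eq_zero (e s)⟩

theorem eventually_ne_zero (h : Approximates l φ θ) {r : R} (hr : θ r ≠ 0) :
    ∀ᶠ k in l, φ k r ≠ 0 :=
  ((h.tendsto r).eventually_ne hr).mono fun k hk hzero => hk (by rw [hzero, map_zero])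

theorem tendsto_eval₂ (h : Approximates l φ θ) {w : α → ℝ} (hw : Tendsto w l (𝓝 y)) (p : R[X]) :
    Tendsto (fun k => p.eval₂ ((algebraMap F ℝ).comp (φ k)) (w k)) l (𝓝 (p.eval₂ θ y)) := by
  simp only [eval₂_eq_sum_range]
  exact tendsto_finsetSum _ fun i _ => (h.tendsto _).mul (hw.pow i)

theorem eventually_map_eq_zero (h : Approximates l φ θ) {p : R[X]} (hp : p.map θ = 0) :
    ∀ᶠ k in l, p.map (φ k) = 0 := by
  have hcoeff : ∀ i ∈ p.support, ∀ᶠ k in l, φ k (p.coeff i) = 0 := fun i _ =>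
    h.eventually_eq_zero _ (by rw [← coeff_map, hp, coeff_zero])
  filter_upwards [(eventually_all_finset _).mpr hcoeff] with k hk
  ext i
  rw [coeff_map, coeff_zero]
  by_cases hi : i ∈ p.support
  · exact hk i hi
  · rw [notMem_support_iff.mp hi, map_zero]

theorem eval₂RingHom (h : Approximates l φ θ) {z : α → F}
    (hz : Tendsto (fun k => algebraMap F ℝ (z k)) l (𝓝 y))
    (hzero : ∀ g : R[X], g.eval₂ θ y = 0 → ∀ᶠ k in l, g.eval₂ (φ k) (z k) = 0) :
    Approximates l (fun k => Polynomial.eval₂RingHom (φ k) (z k))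
      (Polynomial.eval₂RingHom θ y) where
  tendsto p := by
    simpa only [coe_eval₂RingHom, hom_eval₂] using h.tendsto_eval₂ hz p
  eventually_eq_zero := hzero

theorem eventually_eval₂_eq_zero (h : Approximates l φ θ) {f : R[X]} (hf : IsMinpolyAlong θ y f)
    {z : α → F} (hz : ∀ᶠ k in l, f.eval₂ (φ k) (z k) = 0) (g : R[X]) (hg : g.eval₂ θ y = 0) :
    ∀ᶠ k in l, g.eval₂ (φ k) (z k) = 0 := by
  induction hn : g.natDegree using Nat.strong_induction_on generalizing g with
  | h n ih =>
    subst hn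
    rcases lt_or_ge g.natDegree f.natDegree with hlt | hle
    · filter_upwards [h.eventually_map_eq_zero (hf.map_eq_zero g hg hlt)] with k hk
      rw [← eval_map, hk, eval_zero]
    · -- One step of pseudo-division by `f`, whose leading coefficient is eventually invertible.
      have hcancel : f.cancelLeads g =
          C f.leadingCoeff * g - C g.leadingCoeff * X ^ (g.natDegree - f.natDegree) * f := by
        rw [cancelLeads, Nat.sub_eq_zero_of_le hle, pow_zero, mul_one]
      have hcancel_y : (f.cancelLeads g).eval₂ θ y = 0 := by
        simp [hcancel, eval₂_sub, eval₂_mul, hg, hf.eval₂_eq_zero]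
      have hdeg := natDegree_cancelLeads_lt_of_natDegree_le_natDegree hle
        (hf.natDegree_pos.trans_le hle)
      filter_upwards [ih _ hdeg _ hcancel_y rfl, hz,
        h.eventually_ne_zero hf.map_leadingCoeff_ne_zero] with k hk hfk hlead
      simpa [hcancel, eval₂_sub, eval₂_mul, hfk, hlead] using hk

theorem exists_tendsto_eval₂_eq_zero [IsIntegrallyClosedIn F ℝ] [l.NeBot]
    (h : Approximates l φ θ) {f : R[X]} (hf : IsMinpolyAlong θ y f) :
    ∃ z : α → F, Tendsto (fun k => algebraMap F ℝ (z k)) l (𝓝 y) ∧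
      ∀ᶠ k in l, f.eval₂ (φ k) (z k) = 0 := by
  have hsign : ∀ᶠ d in 𝓝[>] 0, (f.map θ).eval (y - d) * (f.map θ).eval (y + d) < 0 := by
    refine eventually_mul_neg_of_deriv_ne_zero (f := fun x => (f.map θ).eval x) ?_ ?_
    · rw [eval_map, hf.eval₂_eq_zero]
    · rw [Polynomial.deriv, derivative_map, eval_map]
      exact hf.eval₂_derivative_ne_zero
  have hlim (x : ℝ) : Tendsto (fun k => (f.map ((algebraMap F ℝ).comp (φ k))).eval x) l
      (𝓝 ((f.map θ).eval x)) := by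
    simpa only [eval_map] using h.tendsto_eval₂ tendsto_const_nhds f
  obtain ⟨w, hw, hroot⟩ := exists_tendsto_and_eventually_eq_zero
    (fun k => (f.map ((algebraMap F ℝ).comp (φ k))).continuous) hlim hsign
  have hmem : ∀ᶠ k in l, ∃ z : F, algebraMap F ℝ z = w k := by
    filter_upwards [hroot, h.eventually_ne_zero hf.map_leadingCoeff_ne_zero] with k hk hlead
    rw [← IsIntegrallyClosedIn.isIntegral_iff, ← isAlgebraic_iff_isIntegral]
    refine ⟨f.map (φ k), fun hzero => hlead ?_, ?_⟩
    · rw [leadingCoeff, ← coeff_map, hzero, coeff_zero]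
    · rwa [aeval_def, eval₂_map, ← eval_map]
  obtain ⟨z, hz⟩ := hmem.choice
  refine ⟨z, hw.congr' (hz.mono fun k hk => hk.symm), ?_⟩
  filter_upwards [hz, hroot] with k hzk hk
  rw [eval_map, ← hzk, ← hom_eval₂] at hk
  exact (map_eq_zero _).mp hk

theorem exists_approximates_eval₂RingHom [IsIntegrallyClosedIn F ℝ] {φ : ℕ → R →+* F}
    (h : Approximates atTop φ θ) (y : ℝ) :
    ∃ z : ℕ → F, Approximates atTop (fun k => Polynomial.eval₂RingHom (φ k) (z k))
      (Polynomial.eval₂RingHom θ y) := by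
  by_cases halg : ∃ g : R[X], g.eval₂ θ y = 0 ∧ g.map θ ≠ 0
  · obtain ⟨f, hf⟩ := exists_isMinpolyAlong halg
    obtain ⟨z, hz, hzero⟩ := h.exists_tendsto_eval₂_eq_zero hf
    exact ⟨z, h.eval₂RingHom hz (h.eventually_eval₂_eq_zero hf hzero)⟩
  · push Not at halg
    obtain ⟨q, -, -, hq⟩ := Real.exists_seq_rat_strictMono_tendsto y
    have : CharZero F := (algebraMap F ℝ).charZero
    refine ⟨fun k => q k, h.eval₂RingHom (by simpa only [map_ratCast] using hq) fun g hg => ?_⟩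
    filter_upwards [h.eventually_map_eq_zero (halg g hg)] with k hk
    rw [← eval_map, hk, eval_zero]

end Approximates

variable (F) [IsIntegrallyClosedIn F ℝ]

theorem exists_approximates_mvPolynomial (n : ℕ) (θ : MvPolynomial (Fin n) ℤ →+* ℝ) :
    ∃ φ : ℕ → MvPolynomial (Fin n) ℤ →+* F, Approximates atTop φ θ := by
  induction n with
  | zero =>
    let e := (MvPolynomial.isEmptyRingEquiv ℤ (Fin 0)).toRingHom
    have hθ : θ = (Int.castRingHom ℝ).comp e := by
      ext i
      · simp
      · exact i.elim0
    have : CharZero F := (algebraMap F ℝ).charZero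
    have hcast : Approximates atTop (fun _ : ℕ => Int.castRingHom F) (Int.castRingHom ℝ) :=
      ⟨fun r => by simp, fun r hr => .of_forall fun _ => by simpa using hr⟩
    exact ⟨_, hθ ▸ hcast.comp e⟩
  | succ n ih =>
    let e := (MvPolynomial.finSuccEquiv ℤ n).toRingEquiv
    let θ' : (MvPolynomial (Fin n) ℤ)[X] →+* ℝ := θ.comp e.symm.toRingHom
    obtain ⟨φ, hφ⟩ := ih (θ'.comp C)
    obtain ⟨z, hz⟩ := hφ.exists_approximates_eval₂RingHom (θ' X)
    have hθ' : eval₂RingHom (θ'.comp C) (θ' X) = θ' := by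
      ext <;> simp
    have hθ : θ = θ'.comp e.toRingHom := by
      ext <;> simp [θ']
    exact ⟨_, hθ ▸ (hθ' ▸ hz).comp e.toRingHom⟩

theorem nonempty_ringHom_of_finiteType {A : Type*} [CommRing A] [Algebra.FiniteType ℤ A]
    (θ : A →+* ℝ) : Nonempty (A →+* F) := by
  obtain ⟨n, π, hπ⟩ := Algebra.FiniteType.iff_quotient_mvPolynomial''.mp ‹Algebra.FiniteType ℤ A›
  obtain ⟨φ, hφ⟩ := exists_approximates_mvPolynomial F n (θ.comp π.toRingHom)
  obtain ⟨G, hG⟩ := (isNoetherianRing_iff_ideal_fg _).mp inferInstance (RingHom.ker π.toRingHom)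
  have hker : ∀ᶠ k in atTop, ∀ g ∈ G, φ k g = 0 := by
    refine (eventually_all_finset G).mpr fun g hg => hφ.eventually_eq_zero g ?_
    have hπg : π.toRingHom g = 0 := RingHom.mem_ker.mp (hG ▸ Ideal.subset_span hg)
    rw [RingHom.comp_apply, hπg, map_zero]
  obtain ⟨k, hk⟩ := hker.exists
  refine ⟨RingHom.liftOfSurjective π.toRingHom hπ ⟨φ k, ?_⟩⟩
  rw [← hG]
  exact Ideal.span_le.mpr hk

theorem nonempty_ringHom_closure_finset (S : Finset ℝ) :
    Nonempty (Subring.closure (S : Set ℝ) →+* F) := by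
  have hfinite : Algebra.FiniteType ℤ (Algebra.adjoin ℤ (S : Set ℝ)) :=
    .adjoin_of_finite S.finite_toSet
  rw [Algebra.adjoin_int] at hfinite
  have : Algebra.FiniteType ℤ (Subring.closure (S : Set ℝ)) := hfinite
  exact nonempty_ringHom_of_finiteType F (Subring.subtype _)

end Approximates

instance isIntegrallyClosedIn_realAlg : IsIntegrallyClosedIn RealAlg ℝ := by
  refine isIntegrallyClosedIn_iff.mpr ⟨(algebraMap RealAlg ℝ).injective, fun {x} hx => ?_⟩
  have : Algebra.IsIntegral ℚ RealAlg := (algebraicClosure.isAlgebraic ℚ ℝ).isIntegral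
  have hx : IsAlgebraic ℚ x := (isIntegral_trans x hx).isAlgebraic
  exact ⟨⟨x, mem_algebraicClosure_iff.mpr hx⟩, rfl⟩

theorem stmt14_general {F : Type*} [Field F] (i : RealAlg →+* F) (j : F →+* ℝ) (m : ℕ)
    (t : OLTerm) :
    (∀ v : ℕ → Submodule F (Fin m → F), t.evalF v = ⊤) ↔
      (∀ v : ℕ → Submodule ℝ (Fin m → ℝ), t.evalF v = ⊤) := by
  constructor <;> refine fun ht v => OLTerm.evalF_eq_top_of_forall_finset (fun S => ?_) ht v
  · exact (nonempty_ringHom_closure_finset RealAlg S).map i.comp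
  · exact ⟨j.comp (Subring.subtype _)⟩

/-- Let `𝔽` be the field of real algebraic numbers and `m` a positive integer.  An
ortholattice term is a tautology of the subspace ortholattice `L(𝔽^m)` if and only if
it is a tautology of the subspace ortholattice `L(ℝ^m)`. -/
theorem stmt14 (m : ℕ) (hm : 0 < m) (t : OLTerm) :
    (∀ v : ℕ → Submodule RealAlg (Fin m → RealAlg), t.evalF v = ⊤) ↔
    (∀ v : ℕ → Submodule ℝ (Fin m → ℝ), t.evalF v = ⊤) := by
  exact stmt14_general (RingHom.id RealAlg) (algebraMap RealAlg ℝ) m t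
end
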